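/- There exists an absolute constant c > 0 such that for all real numbers α ≥ β ≥ 2 and r ≥ s > −1 and all integers n ≥ (2α+r+1)², one has ∫_{−1}^1 |p_n^{(α+r+1, β−1)}(x)/p_n^{(α+r+1, β−1)}(1)|² (1−x)^{s+α} (1+x)^β dx ≤ c · 2^{α+β+s} (α+r+1)^{1/3} Γ(α+r+2)^{(4α+4s+4)/(2α+2r+3)} n^{−2α−2s−2}. -/

import Mathlib

noncomputable section

open MeasureTheory Real Set
open scoped RealInnerProductSpace

/-- Value at `x` of the orthonormalized Jacobi polynomial `p_n^{(α,β)}`. -/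
def jacobiP (α β : ℝ) (n : ℕ) (x : ℝ) : ℝ :=
  Real.sqrt ((2 * (n : ℝ) + α + β + 1) / 2 ^ (α + β + 1) *
      (Real.Gamma ((n : ℝ) + α + β + 1) * (n.factorial : ℝ) /
        (Real.Gamma ((n : ℝ) + α + 1) * Real.Gamma ((n : ℝ) + β + 1)))) *
    (Real.Gamma (α + n + 1) / ((n.factorial : ℝ) * Real.Gamma (α + β + n + 1))) *
    ∑ m ∈ Finset.range (n + 1),
      (n.choose m : ℝ) * (Real.Gamma (α + β + n + m + 1) / Real.Gamma (α + m + 1)) *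
        ((x - 1) / 2) ^ m

/-- The kernel `K_n^{(α,β)}(x) = Σ_{ℓ<n} p_ℓ^{(α,β)}(1) p_ℓ^{(α,β)}(x)`. -/
def jacobiK (α β : ℝ) (n : ℕ) (x : ℝ) : ℝ :=
  ∑ ℓ ∈ Finset.range n, jacobiP α β ℓ 1 * jacobiP α β ℓ x

/-- The unit sphere `S^d ⊂ ℝ^{d+1}`. -/
abbrev Sph (d : ℕ) := Metric.sphere (0 : EuclideanSpace ℝ (Fin (d + 1))) 1

/-- The rotation invariant Riemannian volume probability measure `μ_d^*` on `S^d`. -/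
def sphMeasure (d : ℕ) : Measure (Sph d) :=
  ((volume : Measure (EuclideanSpace ℝ (Fin (d + 1)))).toSphere Set.univ)⁻¹ •
    (volume : Measure (EuclideanSpace ℝ (Fin (d + 1)))).toSphere

/-- `f : S^d → ℝ` is the restriction to the sphere of an algebraic polynomial in `d+1`
variables of total degree `< n`, i.e. `f ∈ Π_n^d`. -/
def IsSphPoly (d : ℕ) (n : ℝ) (f : Sph d → ℝ) : Prop :=
  ∃ p : MvPolynomial (Fin (d + 1)) ℝ, (p.totalDegree : ℝ) < n ∧
    ∀ y : Sph d, f y = MvPolynomial.eval (fun i => (y : EuclideanSpace ℝ (Fin (d + 1))) i) p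

/-- Integral of `f` with respect to a signed measure (via the Jordan decomposition). -/
def sInt {X : Type*} [MeasurableSpace X] (ν : SignedMeasure X) (f : X → ℝ) : ℝ :=
  (∫ x, f x ∂ν.toJordanDecomposition.posPart) - ∫ x, f x ∂ν.toJordanDecomposition.negPart

/-- Integral of `f` over a set `s` with respect to a signed measure. -/
def sIntOn {X : Type*} [MeasurableSpace X] (ν : SignedMeasure X) (s : Set X) (f : X → ℝ) : ℝ :=
  (∫ x in s, f x ∂ν.toJordanDecomposition.posPart) -
    ∫ x in s, f x ∂ν.toJordanDecomposition.negPart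

/-- `ν` is a quadrature measure of order `n` on `S^d`. -/
def IsQuadrature (d : ℕ) (n : ℝ) (ν : SignedMeasure (Sph d)) : Prop :=
  ∀ f : Sph d → ℝ, IsSphPoly d n f → sInt ν f = ∫ y, f y ∂sphMeasure d

/-- `ν` satisfies the Marcinkiewicz-Zygmund inequality of order `n` with constant `c`;
`ν ∈ MZ(d;n)` means this holds for some `c`, and `|||ν|||_{d;n}` is the least such `c`. -/
def IsMZ (d : ℕ) (n : ℝ) (ν : SignedMeasure (Sph d)) (c : ℝ) : Prop :=
  ∀ f : Sph d → ℝ, IsSphPoly d (n / 2) f →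
    (∫ y, (f y) ^ 2 ∂ν.totalVariation) ≤ c * ∫ y, (f y) ^ 2 ∂sphMeasure d

/-- `ω_d`, the volume of `S^d`. -/
def omegaS (d : ℕ) : ℝ := 2 * Real.pi ^ (((d : ℝ) + 1) / 2) / Real.Gamma (((d : ℝ) + 1) / 2)

/-- The reproducing kernel `K_{d;n}` of `Π_n^d`. -/
def sphK (d n : ℕ) (x : ℝ) : ℝ :=
  (omegaS d / omegaS (d - 1)) * jacobiK ((d : ℝ) / 2 - 1) ((d : ℝ) / 2 - 1) n x

/-- The kernel `Φ̃_{d;n,r}`. -/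
def PhiTilde (d n : ℕ) (r : ℝ) (x : ℝ) : ℝ :=
  sphK d ((d + 2) * n) x *
    (jacobiP ((d : ℝ) / 2 + r) ((d : ℝ) / 2 - 2) (d * n) x /
      jacobiP ((d : ℝ) / 2 + r) ((d : ℝ) / 2 - 2) (d * n) 1)

/-- The kernel `Φ_{d;n,r}`. -/
def Phi (d n : ℕ) (r : ℝ) (x : ℝ) : ℝ := PhiTilde d n r x * ((1 + x) / 2) ^ n

/-- The inner product `x·y` of two points of `S^d`. -/
def ip {d : ℕ} (x y : Sph d) : ℝ :=
  ⟪(x : EuclideanSpace ℝ (Fin (d + 1))), (y : EuclideanSpace ℝ (Fin (d + 1)))⟫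

/-- The operator `σ_{d;n,r}(ν, f)`. -/
def sigmaOp (d n : ℕ) (r : ℝ) (ν : SignedMeasure (Sph d)) (f : Sph d → ℝ) (x : Sph d) : ℝ :=
  sInt ν (fun y => f y * Phi d n r (ip x y))

/-- The operator `σ̃_{d;n,r}(ν, f)`. -/
def sigmaTildeOp (d n : ℕ) (r : ℝ) (ν : SignedMeasure (Sph d)) (f : Sph d → ℝ) (x : Sph d) : ℝ :=
  sInt ν (fun y => f y * PhiTilde d n r (ip x y))

/-- The uniform (supremum) norm `‖f‖_∞`. -/
def supNorm {X : Type*} (f : X → ℝ) : ℝ := sSup (Set.range fun x => |f x|)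

/-- `E_{d;n}(f)`, the degree of approximation of `f` from `Π_n^d` in the uniform norm. -/
def bestApprox (d : ℕ) (n : ℝ) (f : Sph d → ℝ) : ℝ :=
  sInf {t | ∃ g, IsSphPoly d n g ∧ ∀ y, |f y - g y| ≤ t}

/-- `dim Π_n^d = (2n+d−2)·Γ(n+d−1)/(Γ(n)·Γ(d+1))` (for `n ≥ 2`). -/
def dimPi (d n : ℕ) : ℝ :=
  (2 * (n : ℝ) + d - 2) * Real.Gamma ((n : ℝ) + d - 1) /
    (Real.Gamma n * Real.Gamma ((d : ℝ) + 1))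


namespace JacAux

open Polynomial in
lemma alt_sum_poly (n : ℕ) (P : ℝ[X]) (hP : P.natDegree < n) :
    ∑ m ∈ Finset.range (n + 1), (-1 : ℝ) ^ m * (n.choose m : ℝ) * P.eval (m : ℝ) = 0 := by
  have h := congrFun (Polynomial.fwdDiff_iter_eq_zero_of_degree_lt hP) 0
  rw [fwdDiff_iter_eq_sum_shift] at h
  have h2 : ∑ m ∈ Finset.range (n + 1), (-1 : ℝ) ^ m * (n.choose m : ℝ) * P.eval (m : ℝ)
      = (-1 : ℝ) ^ n * ∑ k ∈ Finset.range (n + 1),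
        ((-1 : ℤ) ^ (n - k) * n.choose k) • P.eval ((0 : ℝ) + k • (1 : ℝ)) := by
    rw [Finset.mul_sum]
    refine Finset.sum_congr rfl fun m hm => ?_
    have hm' : m ≤ n := by simpa [Nat.lt_succ_iff] using hm
    obtain ⟨j, rfl⟩ := Nat.exists_eq_add_of_le hm'
    simp only [zsmul_eq_mul, nsmul_eq_mul, mul_one, zero_add, Nat.add_sub_cancel_left]
    push_cast
    have : ((-1 : ℝ)) ^ (m + j) * (-1) ^ j = (-1) ^ m := by
      rw [pow_add, mul_assoc, ← pow_add, ← two_mul, pow_mul]; simp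
    rw [← this]; ring
  rw [h2, h]; simp

lemma alt_sum_inv (n : ℕ) : ∀ a : ℝ, 0 < a →
    ∑ m ∈ Finset.range (n + 1), (-1 : ℝ) ^ m * (n.choose m : ℝ) * (1 / (a + m))
      = n.factorial / ∏ i ∈ Finset.range (n + 1), (a + i) := by
  induction n with
  | zero => intro a ha; simp
  | succ n ih =>
    intro a ha
    have h1 : ∑ m ∈ Finset.range (n + 2), (-1 : ℝ) ^ m * ((n+1).choose m : ℝ) * (1 / (a + m))
      = ∑ m ∈ Finset.range (n + 1), (-1 : ℝ) ^ m * (n.choose m : ℝ) * (1 / (a + m))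
       - ∑ m ∈ Finset.range (n + 1), (-1 : ℝ) ^ m * (n.choose m : ℝ) * (1 / ((a+1) + m)) := by
      rw [Finset.sum_range_succ']
      have : ∑ m ∈ Finset.range (n + 1), (-1 : ℝ) ^ m * (n.choose m : ℝ) * (1 / (a + m))
        = ∑ m ∈ Finset.range (n + 2), (-1 : ℝ) ^ m * (n.choose m : ℝ) * (1 / (a + m)) := by
        rw [Finset.sum_range_succ _ (n+1)]; simp
      rw [this, Finset.sum_range_succ' _ (n+1)]
      simp only [Nat.choose_succ_succ, pow_succ]
      push_cast
      rw [eq_sub_iff_add_eq, add_right_comm, ← Finset.sum_add_distrib]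
      congr 1
      · refine Finset.sum_congr rfl fun m _ => ?_
        rw [show a + 1 + (m:ℝ) = a + (m + 1) by ring]; ring
      · simp
    rw [h1, ih a ha, ih (a+1) (by linarith)]
    have hp : ∏ i ∈ Finset.range (n + 2), (a + i) = (∏ i ∈ Finset.range (n+1), (a + (i:ℝ))) * (a + (n + 1)) := by
      rw [Finset.prod_range_succ]; push_cast; ring
    have hq : ∏ i ∈ Finset.range (n + 2), (a + i) = (∏ i ∈ Finset.range (n+1), (a + 1 + (i:ℝ))) * a := by
      rw [Finset.prod_range_succ']; push_cast
      congr 1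
      · refine Finset.prod_congr rfl fun m _ => by ring
      · ring
    have p1 : 0 < ∏ i ∈ Finset.range (n+1), (a + (i:ℝ)) := Finset.prod_pos fun i _ => by positivity
    have p2 : 0 < ∏ i ∈ Finset.range (n+1), (a + 1 + (i:ℝ)) := Finset.prod_pos fun i _ => by positivity
    have e1 : (n.factorial : ℝ) / ∏ i ∈ Finset.range (n+1), (a + (i:ℝ))
       = n.factorial * (a + (n+1)) / ∏ i ∈ Finset.range (n + 2), (a + (i:ℝ)) := by
      rw [hp]; field_simp
    have e2 : (n.factorial : ℝ) / ∏ i ∈ Finset.range (n+1), (a + 1 + (i:ℝ))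
       = n.factorial * a / ∏ i ∈ Finset.range (n + 2), (a + (i:ℝ)) := by
      rw [hq]; field_simp
    rw [e1, e2, ← sub_div, Nat.factorial_succ]; push_cast; ring

lemma gamma_add_nat (x : ℝ) (hx : 0 < x) (k : ℕ) :
    Real.Gamma (x + k) = Real.Gamma x * ∏ i ∈ Finset.range k, (x + i) := by
  induction k with
  | zero => simp
  | succ k ih =>
    rw [Finset.prod_range_succ, ← mul_assoc, ← ih]; push_cast
    rw [← add_assoc, Real.Gamma_add_one (by positivity)]; ring

lemma integral_beta (u v : ℝ) (hu : 0 < u) (hv : 0 < v) :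
    ∫ x in (0:ℝ)..1, x ^ (u - 1) * (1 - x) ^ (v - 1)
      = Real.Gamma u * Real.Gamma v / Real.Gamma (u + v) := by
  have h := Complex.betaIntegral_eq_Gamma_mul_div u v (by simpa) (by simpa)
  have h2 : Complex.betaIntegral u v = ((∫ x in (0:ℝ)..1, x ^ (u - 1) * (1 - x) ^ (v - 1) : ℝ) : ℂ) := by
    rw [Complex.betaIntegral, ← intervalIntegral.integral_ofReal]
    refine intervalIntegral.integral_congr fun x hx => ?_
    rw [uIcc_of_le zero_le_one] at hx
    simp only [Complex.ofReal_mul]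
    rw [Complex.ofReal_cpow hx.1, Complex.ofReal_cpow (by linarith [hx.2])]
    push_cast; rfl
  rw [h2, ← Complex.ofReal_add, Complex.Gamma_ofReal, Complex.Gamma_ofReal, Complex.Gamma_ofReal] at h
  exact_mod_cast h

/-- coefficients -/
def B (a b : ℝ) (n m : ℕ) : ℝ :=
  (-1) ^ m * (n.choose m : ℝ) * (Real.Gamma (a + b + n + m + 1) * Real.Gamma (a + 1) /
    (Real.Gamma (a + b + n + 1) * Real.Gamma (a + m + 1)))

lemma I_pos (a b : ℝ) (ha : 0 < a) (hb : 0 < b) (n k : ℕ) (hk : k + 1 ≤ n) :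
    ∑ m ∈ Finset.range (n + 1), B a b n m *
      (Real.Gamma (a + (k + 1 : ℕ) + m) * Real.Gamma (b + 1) /
        Real.Gamma (a + (k + 1 : ℕ) + m + (b + 1))) = 0 := by
  obtain ⟨j, rfl⟩ := Nat.exists_eq_add_of_le hk
  set P : Polynomial ℝ := (∏ i ∈ Finset.range k, (Polynomial.X + Polynomial.C (a + 1 + i))) *
    ∏ i ∈ Finset.range j, (Polynomial.X + Polynomial.C (a + b + 2 + k + i)) with hP
  have hd : P.natDegree < k + 1 + j := by
    have := Polynomial.natDegree_mul_le (p := ∏ i ∈ Finset.range k, (Polynomial.X + Polynomial.C (a + 1 + (i:ℝ))))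
      (q := ∏ i ∈ Finset.range j, (Polynomial.X + Polynomial.C (a + b + 2 + k + (i:ℝ))))
    simp only [Polynomial.natDegree_prod_of_monic _ _ (fun i _ => Polynomial.monic_X_add_C _), Polynomial.natDegree_X_add_C] at this
    simp only [Finset.sum_const, Finset.card_range, smul_eq_mul, mul_one] at this
    rw [hP]; omega
  have h := alt_sum_poly _ P hd
  rw [← mul_right_inj' (a := Real.Gamma (a+1) * Real.Gamma (b+1) / Real.Gamma (a + b + (k + 1 + j : ℕ) + 1)) (by positivity), Finset.mul_sum, mul_zero] at h
  rw [← h]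
  refine Finset.sum_congr rfl fun m _ => ?_
  have e1 : Real.Gamma (a + (k + 1 : ℕ) + m) = Real.Gamma (a + m + 1) * ∏ i ∈ Finset.range k, ((m:ℝ) + (a + 1 + i)) := by
    rw [show a + (k + 1 : ℕ) + m = (a + m + 1) + k by push_cast; ring, gamma_add_nat _ (by positivity)]
    congr 1; exact Finset.prod_congr rfl fun i _ => by ring
  have e2 : Real.Gamma (a + b + (k + 1 + j : ℕ) + m + 1) = Real.Gamma (a + (k + 1 : ℕ) + m + (b + 1)) * ∏ i ∈ Finset.range j, ((m:ℝ) + (a + b + 2 + k + i)) := by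
    rw [show a + b + (k + 1 + j : ℕ) + m + 1 = (a + (k + 1 : ℕ) + m + (b + 1)) + j by push_cast; ring, gamma_add_nat _ (by positivity)]
    congr 1; exact Finset.prod_congr rfl fun i _ => by push_cast; ring
  have g1 : 0 < Real.Gamma (a + m + 1) := by positivity
  have g2 : 0 < Real.Gamma (a + (k + 1 : ℕ) + m + (b + 1)) := by positivity
  have g3 : 0 < Real.Gamma (a + b + (k + 1 + j : ℕ) + 1) := by positivity
  have eP : P.eval (m : ℝ) = (∏ i ∈ Finset.range k, ((m:ℝ) + (a + 1 + i))) * ∏ i ∈ Finset.range j, ((m:ℝ) + (a + b + 2 + k + i)) := by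
    simp [hP, Polynomial.eval_prod]
  rw [B, e1, e2, eP]
  generalize (∏ i ∈ Finset.range k, ((m:ℝ) + (a + 1 + i))) = U
  generalize (∏ i ∈ Finset.range j, ((m:ℝ) + (a + b + 2 + k + i))) = V
  field_simp

lemma I_zero (a b : ℝ) (ha : 0 < a) (hb : 0 < b) (n : ℕ) :
    ∑ m ∈ Finset.range (n + 1), B a b n m *
      (Real.Gamma (a + (0 : ℕ) + m) * Real.Gamma (b + 1) /
        Real.Gamma (a + (0 : ℕ) + m + (b + 1)))
     = Real.Gamma (a + 1) * Real.Gamma a * n.factorial * Real.Gamma (n + b + 1) /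
        (Real.Gamma (a + b + n + 1) * Real.Gamma (n + a + 1)) := by
  set T : Polynomial ℝ := ∏ i ∈ Finset.range n, (Polynomial.X + Polynomial.C (a + b + 1 + i)) with hT
  have hTd : T.natDegree = n := by
    rw [hT]
    simp only [Polynomial.natDegree_prod_of_monic _ _ (fun i _ => Polynomial.monic_X_add_C _), Polynomial.natDegree_X_add_C]
    simp
  have hTe : ∀ x : ℝ, T.eval x = ∏ i ∈ Finset.range n, (x + (a + b + 1 + i)) := by
    intro x; simp [hT, Polynomial.eval_prod]
  obtain ⟨R, hR⟩ := Polynomial.X_sub_C_dvd_sub_C_eval (a := -a) (p := T)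
  have hsum : ∑ m ∈ Finset.range (n + 1), (-1 : ℝ) ^ m * (n.choose m : ℝ) * R.eval (m:ℝ) = 0 := by
    rcases Nat.eq_zero_or_pos n with rfl | hn
    · have : T = 1 := by simp [hT]
      rw [this] at hR
      simp at hR
      rcases hR with h | h
      · exact absurd h (by simpa using Polynomial.X_sub_C_ne_zero (-a))
      · simp [h]
    · apply alt_sum_poly
      by_cases hR0 : R = 0
      · simp [hR0, hn]
      · have h1 := congrArg Polynomial.natDegree hR
        rw [Polynomial.natDegree_sub_C, hTd, Polynomial.natDegree_mul (Polynomial.X_sub_C_ne_zero _) hR0, Polynomial.natDegree_X_sub_C] at h1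
        omega
  have hRe : ∀ x : ℝ, T.eval x = T.eval (-a) + (x + a) * R.eval x := by
    intro x
    have := congrArg (Polynomial.eval x) hR
    simp only [Polynomial.eval_sub, Polynomial.eval_C, Polynomial.eval_mul, Polynomial.eval_X] at this
    linarith
  have hTa : T.eval (-a) = Real.Gamma (n + b + 1) / Real.Gamma (b + 1) := by
    rw [hTe, show (n : ℝ) + b + 1 = (b + 1) + n by ring, gamma_add_nat (b+1) (by positivity)]
    have : Real.Gamma (b+1) ≠ 0 := by positivity
    rw [mul_div_cancel_left₀ _ this]
    exact Finset.prod_congr rfl fun i _ => by ring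
  have hinv := alt_sum_inv n a ha
  have hga : ∏ i ∈ Finset.range (n + 1), (a + (i:ℝ)) = Real.Gamma (n + a + 1) / Real.Gamma a := by
    rw [show (n : ℝ) + a + 1 = a + (n + 1 : ℕ) by push_cast; ring, gamma_add_nat a ha]
    field_simp
  have key : ∀ m : ℕ, B a b n m *
      (Real.Gamma (a + (0 : ℕ) + m) * Real.Gamma (b + 1) /
        Real.Gamma (a + (0 : ℕ) + m + (b + 1))) =
      Real.Gamma (a+1) * Real.Gamma (b+1) / Real.Gamma (a + b + n + 1) *
       (T.eval (-a) * ((-1 : ℝ) ^ m * (n.choose m : ℝ) * (1 / (a + m))) +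
        (-1 : ℝ) ^ m * (n.choose m : ℝ) * R.eval (m:ℝ)) := by
    intro m
    have e1 : Real.Gamma (a + m + 1) = (a + m) * Real.Gamma (a + m) := Real.Gamma_add_one (by positivity)
    have e2 : Real.Gamma (a + b + n + m + 1) = Real.Gamma (a + m + (b + 1)) * T.eval (m:ℝ) := by
      rw [hTe, show a + b + n + m + 1 = (a + m + (b + 1)) + n by ring, gamma_add_nat _ (by positivity)]
      congr 1; exact Finset.prod_congr rfl fun i _ => by ring
    have g1 : 0 < Real.Gamma (a + m) := by positivity
    have g2 : 0 < Real.Gamma (a + m + (b + 1)) := by positivity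
    have g3 : 0 < Real.Gamma (a + b + n + 1) := by positivity
    have g4 : 0 < a + m := by positivity
    have e3 := hRe m
    simp only [Nat.cast_zero, add_zero]
    rw [B, e1, e2, e3]
    field_simp
    ring
  rw [Finset.sum_congr rfl fun m _ => key m, ← Finset.mul_sum, Finset.sum_add_distrib, hsum, ← Finset.mul_sum, hinv, hga, hTa]
  have : 0 < Real.Gamma (b+1) := by positivity
  have : 0 < Real.Gamma (n + a + 1) := by positivity
  have : 0 < Real.Gamma a := by positivity
  have : 0 < Real.Gamma (a + b + n + 1) := by positivity
  field_simp
  ring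

/-- the normalized polynomial in the variable `y = (1-x)/2` -/
def Q (a b : ℝ) (n : ℕ) : Polynomial ℝ :=
  ∑ m ∈ Finset.range (n + 1), Polynomial.C (B a b n m) * Polynomial.X ^ m

lemma Q_eval (a b : ℝ) (n : ℕ) (y : ℝ) :
    (Q a b n).eval y = ∑ m ∈ Finset.range (n + 1), B a b n m * y ^ m := by
  simp [Q, Polynomial.eval_finsetSum]

lemma B_zero (a b : ℝ) (ha : 0 < a) (hb : 0 < b) (n : ℕ) : B a b n 0 = 1 := by
  have : 0 < Real.Gamma (a + b + n + 1) := by positivity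
  have : 0 < Real.Gamma (a + 1) := by positivity
  simp [B]; exact ⟨by positivity, by positivity⟩

lemma Q_coeff (a b : ℝ) (n m : ℕ) : (Q a b n).coeff m = B a b n m := by
  rw [Q, Polynomial.finsetSum_coeff]
  simp only [Polynomial.coeff_C_mul_X_pow]
  by_cases h : m < n + 1
  · simp [h]
  · have : n.choose m = 0 := Nat.choose_eq_zero_of_lt (by omega)
    simp [h, B, this]

lemma B_rec (a b : ℝ) (ha : 0 < a) (hb : 0 < b) (n m : ℕ) :
    ((m : ℝ) + 1) * (m + a + 1) * B a b n (m + 1) =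
      ((m : ℝ) - n) * (m + (n + a + b + 1)) * B a b n m := by
  have hc : (n.choose (m+1) : ℝ) * (m + 1) = n.choose m * (n - m) := by
    rcases le_or_gt m n with h | h
    · have := Nat.choose_succ_right_eq n m
      have h2 : (((n.choose (m+1) * (m+1) : ℕ)) : ℝ) = ((n.choose m * (n - m) : ℕ) : ℝ) := by
        exact_mod_cast this
      push_cast [Nat.cast_sub h] at h2
      exact h2
    · rw [Nat.choose_eq_zero_of_lt h, Nat.choose_eq_zero_of_lt (by omega)]; simp
  have e1 : Real.Gamma (a + b + n + (m + 1 : ℕ) + 1) = (a + b + n + m + 1) * Real.Gamma (a + b + n + m + 1) := by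
    rw [← Real.Gamma_add_one (by positivity)]; congr 1; push_cast; ring
  have e2 : Real.Gamma (a + (m + 1 : ℕ) + 1) = (a + m + 1) * Real.Gamma (a + m + 1) := by
    rw [← Real.Gamma_add_one (by positivity)]; congr 1; push_cast; ring
  have g1 : 0 < Real.Gamma (a + m + 1) := by positivity
  have g2 : 0 < Real.Gamma (a + b + n + 1) := by positivity
  have g3 : 0 < a + m + 1 := by positivity
  rw [B, B, e1, e2, pow_succ]
  calc _ = -((n.choose (m+1) : ℝ) * (m + 1)) * ((-1) ^ m * ((a + b + n + m + 1) * Real.Gamma (a + b + n + m + 1) * Real.Gamma (a+1) / (Real.Gamma (a + b + n + 1) * Real.Gamma (a + m + 1)))) := by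
        field_simp; ring
    _ = _ := by rw [hc]; ring

open Polynomial in
lemma Q_ode (a b : ℝ) (ha : 0 < a) (hb : 0 < b) (n : ℕ) (y : ℝ) :
    y * (1 - y) * (Q a b n).derivative.derivative.eval y
      + (a + 1 - (a + b + 2) * y) * (Q a b n).derivative.eval y
      + n * (n + a + b + 1) * (Q a b n).eval y = 0 := by
  have h : X * (Q a b n).derivative.derivative - X * (X * (Q a b n).derivative.derivative)
      + C (a + 1) * (Q a b n).derivative - C (a + b + 2) * (X * (Q a b n).derivative)
      + C (n * (n + a + b + 1)) * Q a b n = 0 := by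
    ext m
    have hr := B_rec a b ha hb n m
    rcases m with _ | _ | m
    · simp only [coeff_add, coeff_sub, coeff_C_mul, coeff_X_mul_zero, coeff_derivative, Q_coeff, coeff_zero]
      push_cast at hr ⊢; linarith
    · simp only [coeff_add, coeff_sub, coeff_C_mul, coeff_X_mul, coeff_X_mul_zero, coeff_derivative, Q_coeff, coeff_zero]
      push_cast at hr ⊢; linarith
    · simp only [coeff_add, coeff_sub, coeff_C_mul, coeff_X_mul, coeff_derivative, Q_coeff, coeff_zero]
      push_cast at hr ⊢; linarith
  have h2 := congrArg (Polynomial.eval y) h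
  simp only [eval_add, eval_sub, eval_mul, eval_X, eval_C, eval_zero] at h2
  linarith

lemma Q_le_one (a b : ℝ) (ha : 0 < a) (hb : 0 < b) (hab : b ≤ a) (n : ℕ) (hn : 0 < n) (y : ℝ)
    (h0 : 0 ≤ y) (h1 : y ≤ 1 / 2) : ((Q a b n).eval y) ^ 2 ≤ 1 := by
  set l : ℝ := n * (n + a + b + 1) with hl
  have hlp : 0 < l := by positivity
  set F : Polynomial ℝ := Polynomial.C l * Q a b n ^ 2 + Polynomial.X * (1 - Polynomial.X) * (Q a b n).derivative ^ 2 with hF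
  have hFe : ∀ y, F.eval y = l * ((Q a b n).eval y) ^ 2 + y * (1 - y) * ((Q a b n).derivative.eval y) ^ 2 := by
    intro y; simp [hF]
  have hder : ∀ y, F.derivative.eval y = ((Q a b n).derivative.eval y) ^ 2 * (-(2 * a + 1) + 2 * (a + b + 1) * y) := by
    intro y
    have h := Q_ode a b ha hb n y
    simp only [hF, Polynomial.derivative_add, Polynomial.derivative_mul, Polynomial.derivative_C, Polynomial.derivative_pow, Polynomial.derivative_X, Polynomial.derivative_sub, Polynomial.derivative_one, Polynomial.eval_add, Polynomial.eval_mul, Polynomial.eval_C, Polynomial.eval_pow, Polynomial.eval_X, Polynomial.eval_sub, Polynomial.eval_one, Polynomial.eval_zero]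
    simp
    rw [← hl] at h
    linear_combination 2 * ((Q a b n).derivative.eval y) * h
  have hanti : AntitoneOn (fun y => F.eval y) (Icc 0 (1/2)) := by
    apply antitoneOn_of_deriv_nonpos (convex_Icc _ _) (F.continuous.continuousOn) (F.differentiable.differentiableOn)
    intro x hx
    rw [interior_Icc] at hx
    rw [Polynomial.deriv, hder]
    apply mul_nonpos_of_nonneg_of_nonpos (sq_nonneg _)
    nlinarith [hx.1, hx.2]
  have h2 := hanti (left_mem_Icc.2 (by norm_num)) (mem_Icc.2 ⟨h0, h1⟩) h0
  simp only [hFe] at h2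
  have hQ0 : (Q a b n).eval 0 = 1 := by
    rw [← Polynomial.coeff_zero_eq_eval_zero, Q_coeff, B_zero a b ha hb]
  rw [hQ0] at h2
  have h3 : 0 ≤ y * (1 - y) * ((Q a b n).derivative.eval y) ^ 2 := mul_nonneg (mul_nonneg h0 (by linarith)) (sq_nonneg _)
  have : l * ((Q a b n).eval y) ^ 2 ≤ l * 1 := by linarith
  exact le_of_mul_le_mul_left this hlp

lemma cont_w (t b : ℝ) (ht : 0 ≤ t) (hb : 0 ≤ b) : Continuous fun y : ℝ => y ^ t * (1 - y) ^ b := by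
  apply Continuous.mul
  · exact Real.continuous_rpow_const ht
  · exact (Real.continuous_rpow_const hb).comp (by fun_prop)

lemma int_Q (a b : ℝ) (ha : 1 < a) (hb : 0 < b) (n k : ℕ) :
    ∫ y in (0:ℝ)..1, (Q a b n).eval y * y ^ k * (y ^ (a - 1) * (1 - y) ^ b)
      = ∑ m ∈ Finset.range (n + 1), B a b n m *
      (Real.Gamma (a + k + m) * Real.Gamma (b + 1) /
        Real.Gamma (a + k + m + (b + 1))) := by
  have h1 : ∀ y ∈ uIcc (0:ℝ) 1, (Q a b n).eval y * y ^ k * (y ^ (a - 1) * (1 - y) ^ b)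
     = ∑ m ∈ Finset.range (n + 1), B a b n m * (y ^ (a + k + m - 1) * (1 - y) ^ b) := by
    intro y hy
    rw [uIcc_of_le zero_le_one] at hy
    rw [Q_eval, Finset.sum_mul, Finset.sum_mul]
    refine Finset.sum_congr rfl fun m _ => ?_
    have : y ^ (a + k + m - 1) = y ^ m * y ^ k * y ^ (a - 1) := by
      rw [show a + k + m - 1 = (m : ℝ) + k + (a - 1) by ring, Real.rpow_add_of_nonneg hy.1 (by positivity) (by linarith),
        Real.rpow_add_of_nonneg hy.1 (by positivity) (by positivity), Real.rpow_natCast, Real.rpow_natCast]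
    rw [this]; ring
  rw [intervalIntegral.integral_congr h1, intervalIntegral.integral_finsetSum]
  · refine Finset.sum_congr rfl fun m _ => ?_
    rw [intervalIntegral.integral_const_mul, ← integral_beta _ _ (by positivity) (by positivity)]
    simp
  · intro m _
    apply Continuous.intervalIntegrable
    apply (cont_w _ _ _ hb.le).const_mul
    have : (0:ℝ) ≤ k + m := by positivity
    linarith

lemma int_Q_sq (a b : ℝ) (ha : 1 < a) (hb : 0 < b) (n : ℕ) :
    ∫ y in (0:ℝ)..1, ((Q a b n).eval y) ^ 2 * (y ^ (a - 1) * (1 - y) ^ b)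
      = Real.Gamma (a + 1) * Real.Gamma a * n.factorial * Real.Gamma (n + b + 1) /
        (Real.Gamma (a + b + n + 1) * Real.Gamma (n + a + 1)) := by
  have h1 : ∀ y ∈ uIcc (0:ℝ) 1, ((Q a b n).eval y) ^ 2 * (y ^ (a - 1) * (1 - y) ^ b)
     = ∑ k ∈ Finset.range (n + 1), B a b n k * ((Q a b n).eval y * y ^ k * (y ^ (a - 1) * (1 - y) ^ b)) := by
    intro y _
    rw [sq]; nth_rw 2 [Q_eval]
    rw [Finset.mul_sum, Finset.sum_mul]
    exact Finset.sum_congr rfl fun m _ => by ring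
  rw [intervalIntegral.integral_congr h1, intervalIntegral.integral_finsetSum]
  · simp only [intervalIntegral.integral_const_mul, int_Q a b ha hb]
    rw [Finset.sum_range_succ', I_zero a b (by linarith) hb, B_zero a b (by linarith) hb, one_mul]
    rw [Finset.sum_eq_zero, zero_add]
    intro k hk
    rw [I_pos a b (by linarith) hb n k (by simpa using hk), mul_zero]
  · intro k _
    apply Continuous.intervalIntegrable
    have := cont_w (a-1) b (by linarith) hb.le
    have := (Q a b n).continuous
    fun_prop

lemma gamma_ratio (x a : ℝ) (hx : 0 < x) (ha : 1 < a) :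
    Real.Gamma x * x ^ a ≤ Real.Gamma (x + a) := by
  have h := Real.convexOn_log_Gamma.slope_mono_adjacent (x := x) (y := x + 1) (z := x + a)
    (by simpa) (by simp; linarith) (by linarith) (by linarith)
  simp only [Function.comp] at h
  have g : 0 < Real.Gamma x := Real.Gamma_pos_of_pos hx
  rw [Real.Gamma_add_one hx.ne', Real.log_mul hx.ne' g.ne'] at h
  rw [le_div_iff₀ (by linarith), show x + 1 - x = 1 by ring, div_one] at h
  have gp : 0 < Real.Gamma (x + a) := Real.Gamma_pos_of_pos (by linarith)
  rw [← Real.log_le_log_iff (by positivity) gp, Real.log_mul g.ne' (by positivity), Real.log_rpow hx]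
  linarith

lemma gamma_upper (a : ℝ) (ha : 2 < a) : Real.Gamma (a + 1) ≤ a ^ (a + 1 / 2) := by
  have h := Real.convexOn_log_Gamma.slope_mono_adjacent (x := 2) (y := a) (z := a + 1)
    (by simp) (by simp; linarith) (by linarith) (by linarith)
  simp only [Function.comp] at h
  have hx : 0 < a := by linarith
  have g : 0 < Real.Gamma a := Real.Gamma_pos_of_pos hx
  rw [Real.Gamma_add_one hx.ne', Real.log_mul hx.ne' g.ne'] at h
  rw [div_le_iff₀ (by linarith), show a + 1 - a = 1 by ring, div_one, Real.Gamma_two, Real.log_one] at h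
  rw [Real.Gamma_add_one hx.ne', ← Real.log_le_log_iff (by positivity) (by positivity),
    Real.log_mul hx.ne' g.ne', Real.log_rpow hx]
  have : 0 < Real.log a := Real.log_pos (by linarith)
  nlinarith

lemma gamma_prod (a b : ℝ) (ha : 1 < a) (hb : 0 < b) (n : ℕ) (hn : 0 < n) :
    Real.Gamma (a + 1) * Real.Gamma a * n.factorial * Real.Gamma (n + b + 1) /
        (Real.Gamma (a + b + n + 1) * Real.Gamma (n + a + 1))
      ≤ Real.Gamma (a + 1) ^ 2 / a * ((n : ℝ) ^ a)⁻¹ ^ 2 := by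
  have hn' : (0:ℝ) < n := by exact_mod_cast hn
  have h1 := gamma_ratio (n + 1) a (by positivity) ha
  have h2 := gamma_ratio (n + b + 1) a (by positivity) ha
  rw [Real.Gamma_nat_eq_factorial, show (n:ℝ) + 1 + a = n + a + 1 by ring] at h1
  rw [show (n:ℝ) + b + 1 + a = a + b + n + 1 by ring] at h2
  have h3 : (n:ℝ) ^ a ≤ (n + 1 : ℝ) ^ a := Real.rpow_le_rpow hn'.le (by linarith) (by linarith)
  have h4 : (n:ℝ) ^ a ≤ (n + b + 1 : ℝ) ^ a := Real.rpow_le_rpow hn'.le (by linarith) (by linarith)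
  have g1 : 0 < Real.Gamma (a + b + n + 1) := by positivity
  have g2 : 0 < Real.Gamma (n + a + 1) := by positivity
  have g3 : 0 < Real.Gamma (n + b + 1) := by positivity
  have g4 : 0 < Real.Gamma a := by positivity
  have hf : (0:ℝ) < n.factorial := by positivity
  have hp : 0 < (n:ℝ) ^ a := by positivity
  have h5 : (n.factorial : ℝ) * n ^ a ≤ Real.Gamma (n + a + 1) := le_trans (by gcongr) h1
  have h6 : Real.Gamma (n + b + 1) * n ^ a ≤ Real.Gamma (a + b + n + 1) := le_trans (by gcongr) h2
  have h7 := mul_le_mul h5 h6 (by positivity) g2.le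
  rw [Real.Gamma_add_one (by linarith : a ≠ 0), div_le_iff₀ (by positivity)]
  have e : (a * Real.Gamma a) ^ 2 / a * ((n : ℝ) ^ a)⁻¹ ^ 2 * (Real.Gamma (a + b + n + 1) * Real.Gamma (n + a + 1))
    = a * Real.Gamma a ^ 2 * ((n : ℝ) ^ a)⁻¹ ^ 2 * (Real.Gamma (n + a + 1) * Real.Gamma (a + b + n + 1)) := by
    field_simp
  rw [e]
  calc _ = a * Real.Gamma a ^ 2 * ((n : ℝ) ^ a)⁻¹ ^ 2 * ((n.factorial : ℝ) * n ^ a * (Real.Gamma (n + b + 1) * n ^ a)) := by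
        field_simp
    _ ≤ _ := by gcongr

lemma main_y (a b t : ℝ) (n : ℕ) (ha : 2 < a) (hb : 1 ≤ b) (hab : b ≤ a) (ht : 0 ≤ t)
    (hta : t ≤ a - 1) (hn : a ^ 2 ≤ n) :
    ∫ y in (0:ℝ)..1, ((Q a b n).eval y) ^ 2 * (y ^ t * (1 - y) ^ (b + 1))
      ≤ 2 * (Real.Gamma (a + 1) ^ (2 / (2 * a + 1)) / n) ^ (2 * (t + 1)) := by
  have hnp : (0:ℝ) < n := by nlinarith
  have hn0 : 0 < n := by exact_mod_cast hnp
  have hG : 0 < Real.Gamma (a + 1) := by positivity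
  set g : ℝ := Real.Gamma (a + 1) ^ (2 / (2 * a + 1)) with hg
  have hgp : 0 < g := by positivity
  have hga : g ≤ a := by
    calc g ≤ (a ^ (a + 1 / 2)) ^ (2 / (2 * a + 1)) := by
          rw [hg]; exact Real.rpow_le_rpow hG.le (gamma_upper a ha) (by positivity)
      _ = a := by
          rw [← Real.rpow_mul (by linarith)]
          rw [show (a + 1/2) * (2 / (2 * a + 1)) = 1 by field_simp, Real.rpow_one]
  have hGg : Real.Gamma (a + 1) ^ 2 = g ^ (2 * a) * g := by
    nth_rw 2 [← Real.rpow_one g]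
    rw [← Real.rpow_add hgp, hg, ← Real.rpow_mul hG.le,
      show 2 / (2 * a + 1) * (2 * a + 1) = 2 by field_simp]
    norm_num
  set e : ℝ := (g / n) ^ (2:ℝ) with he
  have hep : 0 < e := by positivity
  have he2 : e ≤ 1 / 2 := by
    rw [he, Real.rpow_two]
    have : g / n ≤ 1 / 2 := by
      rw [div_le_iff₀ hnp]; nlinarith
    have h0 : 0 < g / n := by positivity
    calc (g / n) ^ 2 ≤ (1 / 2 : ℝ) ^ 2 := pow_le_pow_left₀ h0.le this 2
      _ ≤ 1 / 2 := by norm_num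
  have het : (g / n) ^ (2 * (t + 1)) = e ^ (t + 1) := by
    rw [he, ← Real.rpow_mul (by positivity)]
  rw [het]
  set F : ℝ → ℝ := fun y => ((Q a b n).eval y) ^ 2 * (y ^ t * (1 - y) ^ (b + 1)) with hF
  set H : ℝ → ℝ := fun y => ((Q a b n).eval y) ^ 2 * (y ^ (a - 1) * (1 - y) ^ b) with hH
  have hQc := (Q a b n).continuous
  have cF : Continuous F := by
    have := cont_w t (b+1) ht (by linarith)
    fun_prop
  have cH : Continuous H := by
    have := cont_w (a-1) b (by linarith) (by linarith)
    fun_prop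
  have near : ∫ y in (0:ℝ)..e, F y ≤ e ^ (t + 1) := by
    have h1 : ∫ y in (0:ℝ)..e, F y ≤ ∫ y in (0:ℝ)..e, y ^ t := by
      apply intervalIntegral.integral_mono_on hep.le (cF.intervalIntegrable _ _)
        ((Real.continuous_rpow_const ht).intervalIntegrable _ _)
      intro y hy
      have q1 := Q_le_one a b (by linarith) (by linarith) hab n hn0 y hy.1 (hy.2.trans he2)
      have q2 : (1 - y) ^ (b + 1) ≤ 1 := Real.rpow_le_one (by linarith [hy.2]) (by linarith [hy.1]) (by linarith)
      have q3 : 0 ≤ (1 - y) ^ (b + 1) := Real.rpow_nonneg (by linarith [hy.2]) _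
      have q4 : 0 ≤ y ^ t := Real.rpow_nonneg hy.1 _
      calc F y ≤ 1 * (y ^ t * 1) := by
            apply mul_le_mul q1 _ (by positivity) zero_le_one
            gcongr
        _ = y ^ t := by ring
    refine h1.trans ?_
    rw [integral_rpow (Or.inl (by linarith)), Real.zero_rpow (by linarith), sub_zero]
    exact div_le_self (by positivity) (by linarith)
  have hHn : ∀ y, 0 ≤ y → y ≤ 1 → 0 ≤ H y := by
    intro y h0 h1
    exact mul_nonneg (sq_nonneg _) (mul_nonneg (Real.rpow_nonneg h0 _) (Real.rpow_nonneg (by linarith) _))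
  have Hint : ∫ y in (0:ℝ)..1, H y ≤ e ^ a := by
    rw [hH, int_Q_sq a b (by linarith) (by linarith)]
    refine (gamma_prod a b (by linarith) (by linarith) n hn0).trans ?_
    rw [hGg]
    have : e ^ a = g ^ (2 * a) * ((n:ℝ) ^ a)⁻¹ ^ 2 := by
      rw [he, ← Real.rpow_mul (by positivity), Real.div_rpow hgp.le hnp.le, div_eq_mul_inv]
      congr 1
      rw [inv_pow, ← Real.rpow_natCast, ← Real.rpow_mul hnp.le]
      congr 2; push_cast; ring
    rw [this]
    gcongr
    rw [div_le_iff₀ (by linarith)]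
    gcongr
  have far : ∫ y in e..(1:ℝ), F y ≤ e ^ (t + 1) := by
    have h1 : ∫ y in e..(1:ℝ), F y ≤ ∫ y in e..(1:ℝ), e ^ (t - (a - 1)) * H y := by
      apply intervalIntegral.integral_mono_on (by linarith) (cF.intervalIntegrable _ _)
        ((cH.const_mul _).intervalIntegrable _ _)
      intro y hy
      have hy0 : 0 < y := lt_of_lt_of_le hep hy.1
      have q2 : (1 - y) ^ (b + 1) ≤ (1 - y) ^ b := by
        rw [Real.rpow_add_of_nonneg (by linarith [hy.2]) (by linarith) zero_le_one, Real.rpow_one]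
        exact mul_le_of_le_one_right (Real.rpow_nonneg (by linarith [hy.2]) _) (by linarith)
      have q3 : 0 ≤ (1 - y) ^ (b + 1) := Real.rpow_nonneg (by linarith [hy.2]) _
      have q4 : y ^ t = y ^ (t - (a - 1)) * y ^ (a - 1) := by
        rw [← Real.rpow_add hy0]; congr 1; ring
      have q5 : y ^ (t - (a - 1)) ≤ e ^ (t - (a - 1)) :=
        Real.rpow_le_rpow_of_nonpos hep hy.1 (by linarith)
      calc F y = ((Q a b n).eval y) ^ 2 * ((y ^ (t - (a - 1)) * y ^ (a - 1)) * (1 - y) ^ (b + 1)) := by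
            rw [hF, ← q4]
        _ ≤ ((Q a b n).eval y) ^ 2 * ((e ^ (t - (a - 1)) * y ^ (a - 1)) * (1 - y) ^ b) := by
            gcongr
        _ = e ^ (t - (a - 1)) * H y := by rw [hH]; ring
    rw [intervalIntegral.integral_const_mul] at h1
    have h2 : ∫ y in e..(1:ℝ), H y ≤ ∫ y in (0:ℝ)..1, H y := by
      rw [← intervalIntegral.integral_add_adjacent_intervals (cH.intervalIntegrable 0 e) (cH.intervalIntegrable e 1)]
      have : 0 ≤ ∫ y in (0:ℝ)..e, H y :=
        intervalIntegral.integral_nonneg hep.le fun y hy => hHn y hy.1 (by linarith [hy.2])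
      linarith
    calc _ ≤ e ^ (t - (a - 1)) * ∫ y in e..(1:ℝ), H y := h1
      _ ≤ e ^ (t - (a - 1)) * e ^ a := by
          gcongr; exact h2.trans Hint
      _ = e ^ (t + 1) := by rw [← Real.rpow_add hep]; congr 1; ring
  rw [← intervalIntegral.integral_add_adjacent_intervals (cF.intervalIntegrable 0 e) (cF.intervalIntegrable e 1)]
  linarith

end JacAux

lemma JacAux.ratio (a b : ℝ) (ha : 0 < a) (hb : 0 < b) (n : ℕ) (x : ℝ) :
    jacobiP a b n x / jacobiP a b n 1 = (JacAux.Q a b n).eval ((1 - x) / 2) := by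
  have g1 : 0 < Real.Gamma (a + b + n + 1) := by positivity
  have g2 : 0 < Real.Gamma (a + 1) := by positivity
  have g3 : 0 < Real.Gamma (a + n + 1) := by positivity
  have g4 : 0 < Real.Gamma (n + a + 1) := by positivity
  have g5 : 0 < Real.Gamma (n + b + 1) := by positivity
  have g6 : 0 < Real.Gamma (n + a + b + 1) := by positivity
  have hone : ∑ m ∈ Finset.range (n + 1),
      (n.choose m : ℝ) * (Real.Gamma (a + b + n + m + 1) / Real.Gamma (a + m + 1)) *
        (((1:ℝ) - 1) / 2) ^ m = Real.Gamma (a + b + n + 1) / Real.Gamma (a + 1) := by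
    rw [Finset.sum_range_succ', Finset.sum_eq_zero]
    · simp
    · intro i _; simp
  rw [jacobiP, jacobiP, hone, JacAux.Q_eval, mul_div_mul_left, Finset.sum_div]
  · refine Finset.sum_congr rfl fun m _ => ?_
    have g7 : 0 < Real.Gamma (a + m + 1) := by positivity
    rw [JacAux.B, show (x - 1) / 2 = (-1) * ((1 - x) / 2) by ring, mul_pow]
    field_simp
  · positivity

/-- Weighted `L²` bound for the normalized Jacobi polynomial `p_n^{(α+r+1,β−1)}`. -/
theorem jacobi_sq_integral_bound :
    ∃ c : ℝ, 0 < c ∧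
      ∀ (α β r s : ℝ) (n : ℕ), 2 ≤ β → β ≤ α → -1 < s → s ≤ r →
        (2 * α + r + 1) ^ 2 ≤ (n : ℝ) →
        (∫ x in (-1 : ℝ)..1,
            (jacobiP (α + r + 1) (β - 1) n x / jacobiP (α + r + 1) (β - 1) n 1) ^ 2 *
              (1 - x) ^ (s + α) * (1 + x) ^ β) ≤
          c * 2 ^ (α + β + s) * (α + r + 1) ^ ((1 : ℝ)/3) *
            Real.Gamma (α + r + 2) ^ ((4 * α + 4 * s + 4) / (2 * α + 2 * r + 3)) *
            (n : ℝ) ^ (-2 * α - 2 * s - 2) := by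
  refine ⟨4, by norm_num, ?_⟩
  intro α β r s n hβ hαβ hs hsr hn
  have ha : 2 < α + r + 1 := by linarith
  have hn2 : (α + r + 1) ^ 2 ≤ (n : ℝ) := le_trans (by gcongr; linarith) hn
  have hnp : (0:ℝ) < n := by nlinarith
  have hm := JacAux.main_y (α + r + 1) (β - 1) (s + α) n ha (by linarith) (by linarith)
    (by linarith) (by linarith) hn2
  rw [show β - 1 + 1 = β by ring, show α + r + 1 + 1 = α + r + 2 by ring] at hm
  set a := α + r + 1 with hadef
  have hG : 0 < Real.Gamma (α + r + 2) := Real.Gamma_pos_of_pos (by linarith)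
  set f : ℝ → ℝ := fun x => (jacobiP a (β - 1) n x / jacobiP a (β - 1) n 1) ^ 2 *
              (1 - x) ^ (s + α) * (1 + x) ^ β with hf
  have hsub := intervalIntegral.integral_comp_sub_mul (a := 0) (b := 1) f (c := 2) (by norm_num) 1
  rw [show (1:ℝ) - 2 * 1 = -1 by norm_num, show (1:ℝ) - 2 * 0 = 1 by norm_num] at hsub
  have hcong : ∫ y in (0:ℝ)..1, f (1 - 2 * y) = ∫ y in (0:ℝ)..1, 2 ^ (s + α + β) *
      (((JacAux.Q a (β - 1) n).eval y) ^ 2 * (y ^ (s + α) * (1 - y) ^ β)) := by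
    refine intervalIntegral.integral_congr fun y hy => ?_
    rw [uIcc_of_le zero_le_one] at hy
    simp only [hf]
    rw [JacAux.ratio a (β - 1) (by linarith) (by linarith), show (1 - (1 - 2 * y)) / 2 = y by ring,
      show 1 - (1 - 2 * y) = 2 * y by ring, show 1 + (1 - 2 * y) = 2 * (1 - y) by ring,
      Real.mul_rpow (by norm_num) hy.1, Real.mul_rpow (by norm_num) (by linarith [hy.2]),
      Real.rpow_add (by norm_num : (0:ℝ) < 2) (s + α) β]
    ring
  rw [hcong, intervalIntegral.integral_const_mul, smul_eq_mul] at hsub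
  have hJ : ∫ x in (-1:ℝ)..1, f x = 2 * 2 ^ (s + α + β) * ∫ y in (0:ℝ)..1,
      (((JacAux.Q a (β - 1) n).eval y) ^ 2 * (y ^ (s + α) * (1 - y) ^ β)) := by
    linarith
  rw [hJ]
  have hpow : (Real.Gamma (α + r + 2) ^ (2 / (2 * a + 1)) / n) ^ (2 * (s + α + 1))
     = Real.Gamma (α + r + 2) ^ ((4 * α + 4 * s + 4) / (2 * α + 2 * r + 3)) *
            (n : ℝ) ^ (-2 * α - 2 * s - 2) := by
    rw [Real.div_rpow (by positivity) hnp.le, ← Real.rpow_mul hG.le, div_eq_mul_inv, ← Real.rpow_neg hnp.le]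
    congr 2
    · rw [hadef, show 2 * (α + r + 1) + 1 = 2 * α + 2 * r + 3 by ring]; ring
    · ring
  rw [hpow] at hm
  have h13 : 1 ≤ a ^ ((1:ℝ)/3) := Real.one_le_rpow (by linarith) (by norm_num)
  set E := Real.Gamma (α + r + 2) ^ ((4 * α + 4 * s + 4) / (2 * α + 2 * r + 3)) *
            (n : ℝ) ^ (-2 * α - 2 * s - 2) with hE
  have hE0 : 0 ≤ E := by positivity
  rw [show s + α + β = α + β + s by ring]
  calc _ ≤ 2 * 2 ^ (α + β + s) * (2 * E) := by gcongr
    _ = 4 * 2 ^ (α + β + s) * 1 * E := by ring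
    _ ≤ 4 * 2 ^ (α + β + s) * a ^ ((1:ℝ)/3) * E := by gcongr
    _ = _ := by rw [hE]; ring
end
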